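/- Let B ≥ 1, let q_1, …, q_B ∈ [0,1], define p_i = q_i ∏_{k=1}^{i−1}(1 − q_k) for 1 ≤ i ≤ B and p_{B+1} = ∏_{k=1}^{B}(1 − q_k), and let X_1, …, X_N be i.i.d. random variables with values in {1, …, B+1} and P(X_n = i) = p_i. Let N_i = #{n : X_n = i}, D_i = N − ∑_{j=1}^{i−1} N_j, and define q̂_i = N_i / D_i when D_i > 0 and q̂_i = q_i when D_i = 0. Then for every i, E[(q̂_i − q_i)^2] = q_i (1 − q_i) · E[ 1_{D_i > 0} / D_i ]. -/

import Mathlib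

open MeasureTheory ProbabilityTheory

/-- The function on `ℕ` with value `0` below `i`, `α` at `i` and `β` above `i`. -/
noncomputable def threeValued (i : ℕ) (α β : ℝ) (x : ℕ) : ℝ :=
  if x = i then α else if i < x then β else 0

lemma threeValued_of_lt {i x : ℕ} (α β : ℝ) (hx : x < i) : threeValued i α β x = 0 := by
  simp [threeValued, hx.ne, hx.not_gt]

/-- The number of coordinates of `x` that are at least `i`. -/
def countGE {N : ℕ} (i : ℕ) (x : Fin N → ℕ) : ℕ :=
  (Finset.univ.filter (fun n => i ≤ x n)).card

lemma countGE_update {N : ℕ} {i : ℕ} {x : Fin N → ℕ} {m : Fin N} (hm : i ≤ x m) :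
    countGE i (Function.update x m i) = countGE i x := by
  unfold countGE
  congr 1
  ext n
  by_cases h : n = m
  · subst h; simp [hm]
  · simp [h]

lemma sum_card_filter_eq_add_countGE {N : ℕ} (i : ℕ) (x : Fin N → ℕ) :
    ∑ j ∈ Finset.range i, (Finset.univ.filter (fun n : Fin N => x n = j)).card + countGE i x
      = N := by
  have hlt : (Finset.univ.filter (fun n : Fin N => x n < i)).card
      = ∑ j ∈ Finset.range i, (Finset.univ.filter (fun n : Fin N => x n = j)).card := by
    rw [Finset.card_eq_sum_card_fiberwise (f := x) (t := Finset.range i)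
      (fun n hn => by simpa using hn)]
    refine Finset.sum_congr rfl fun j hj => ?_
    rw [Finset.filter_filter]
    congr 1
    ext n
    have := Finset.mem_range.mp hj
    simp only [Finset.mem_filter, Finset.mem_univ, true_and]
    omega
  have h := Finset.card_filter_add_card_filter_not (s := (Finset.univ : Finset (Fin N)))
    (fun n => x n < i)
  simp only [not_lt, Finset.card_univ, Fintype.card_fin] at h
  rw [← hlt]
  exact h

lemma sum_threeValued {N : ℕ} (i : ℕ) (r : ℝ) (x : Fin N → ℕ) :
    ∑ n, threeValued i (1 - r) (-r) (x n)
      = ((Finset.univ.filter (fun n : Fin N => x n = i)).card : ℝ) - r * countGE i x := by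
  have h : ∀ n, threeValued i (1 - r) (-r) (x n)
      = (if x n = i then 1 else 0) - r * (if i ≤ x n then 1 else 0) := by
    intro n
    unfold threeValued
    rcases lt_trichotomy (x n) i with h | h | h
    · simp [h.ne, h.not_gt, h.not_ge]
    · simp [h]
    · simp [h.ne', h, h.le]
  simp only [h, Finset.sum_sub_distrib, ← Finset.mul_sum, Finset.sum_boole, countGE]

lemma sum_threeValued_sq {N : ℕ} (i : ℕ) (r : ℝ) (x : Fin N → ℕ) :
    ∑ n, threeValued i (1 - r) (-r) (x n) ^ 2
      = ∑ n, threeValued i ((1 - r) * (1 - 2 * r)) (r * (2 * r - 1)) (x n)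
        + r * (1 - r) * countGE i x := by
  have h : ∀ n, threeValued i (1 - r) (-r) (x n) ^ 2
      = threeValued i ((1 - r) * (1 - 2 * r)) (r * (2 * r - 1)) (x n)
        + r * (1 - r) * (if i ≤ x n then 1 else 0) := by
    intro n
    unfold threeValued
    rcases lt_trichotomy (x n) i with h | h | h
    · simp [h.ne, h.not_gt, h.not_ge]
    · simp only [h, if_true, le_refl]; ring
    · simp only [h.ne', h, h.le, if_true, if_false]; ring
  simp only [h, Finset.sum_add_distrib, ← Finset.mul_sum, Finset.sum_boole, countGE]

lemma sq_sum_eq_sum_sq_add {N : ℕ} (y : Fin N → ℝ) :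
    (∑ n, y n) ^ 2 = ∑ n, y n ^ 2 + ∑ m, y m * ∑ n ∈ Finset.univ.erase m, y n := by
  rw [← Finset.sum_add_distrib, sq, Finset.sum_mul]
  refine Finset.sum_congr rfl fun m _ => ?_
  rw [← Finset.add_sum_erase _ _ (Finset.mem_univ m)]
  ring

/-- Partial sums of the first-detection probabilities. -/
lemma sum_firstDetection (q : ℕ → ℝ) (k : ℕ) :
    ∑ j ∈ Finset.range k, q j * ∏ l ∈ Finset.range j, (1 - q l)
      = 1 - ∏ l ∈ Finset.range k, (1 - q l) := by
  induction k with
  | zero => simp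
  | succ k ih => rw [Finset.sum_range_succ, ih, Finset.prod_range_succ]; ring

section Probability

variable {Ω : Type*} [MeasurableSpace Ω] {μ : Measure Ω}

lemma integrable_comp_of_le [IsFiniteMeasure μ] {N B : ℕ} {X : Fin N → Ω → ℕ}
    (hX : ∀ n, Measurable (X n))
    (hXB : ∀ n ω, X n ω ≤ B) (F : (Fin N → ℕ) → ℝ) :
    Integrable (fun ω => F (fun n => X n ω)) μ := by
  have hmeas : Measurable (fun ω => F (fun n => X n ω)) :=
    (Measurable.of_discrete (f := F)).comp (measurable_pi_lambda _ hX)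
  refine Integrable.of_bound hmeas.aestronglyMeasurable
    (∑ y ∈ Fintype.piFinset fun _ : Fin N => Finset.range (B + 1), ‖F y‖)
    (Filter.Eventually.of_forall fun ω => ?_)
  refine Finset.single_le_sum (f := fun y => ‖F y‖) (fun y _ => norm_nonneg _) ?_
  simpa [Fintype.mem_piFinset, Nat.lt_succ_iff] using fun n => hXB n ω

lemma integral_threeValued [IsProbabilityMeasure μ] {q : ℕ → ℝ} {i : ℕ}
    (hq : ∀ j ≤ i, q j ∈ Set.Icc (0 : ℝ) 1)
    {Y : Ω → ℕ} (hY : Measurable Y)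
    (hdist : ∀ j ≤ i, μ {ω | Y ω = j}
      = ENNReal.ofReal (q j * ∏ k ∈ Finset.range j, (1 - q k))) (α β : ℝ) :
    ∫ ω, threeValued i α β (Y ω) ∂μ
      = (α * q i + β * (1 - q i)) * ∏ k ∈ Finset.range i, (1 - q k) := by
  have hset : ∀ j, MeasurableSet {ω | Y ω = j} := fun j => hY (measurableSet_singleton j)
  have hI : ∀ j, Integrable ({ω | Y ω = j}.indicator (1 : Ω → ℝ)) μ := fun j =>
    (integrable_const (1 : ℝ)).indicator (hset j)
  have hprob : ∀ j ≤ i, ∫ ω, {ω | Y ω = j}.indicator (1 : Ω → ℝ) ω ∂μ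
      = q j * ∏ k ∈ Finset.range j, (1 - q k) := by
    intro j hj
    rw [integral_indicator_one (hset j), measureReal_def, hdist j hj, ENNReal.toReal_ofReal]
    refine mul_nonneg (hq j hj).1 (Finset.prod_nonneg fun k hk => ?_)
    have hk' := Finset.mem_range.mp hk
    exact sub_nonneg.mpr (hq k (by omega)).2
  have hpt : ∀ ω, threeValued i α β (Y ω) = α * {ω | Y ω = i}.indicator (1 : Ω → ℝ) ω
      + β * (1 - ∑ j ∈ Finset.range (i + 1), {ω | Y ω = j}.indicator (1 : Ω → ℝ) ω) := by
    intro ω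
    simp only [Set.indicator_apply, Set.mem_ofPred_eq, Pi.one_apply, Finset.sum_ite_eq,
      Finset.mem_range, threeValued]
    rcases lt_trichotomy (Y ω) i with h | h | h
    · simp [h.ne, h.not_gt, Nat.lt_succ_of_lt h]
    · simp [h]
    · simp [h.ne', h, show ¬ Y ω < i + 1 by omega]
  simp only [hpt]
  have hsum : Integrable
      (fun ω => ∑ j ∈ Finset.range (i + 1), {ω | Y ω = j}.indicator (1 : Ω → ℝ) ω) μ :=
    integrable_finsetSum _ fun j _ => hI j
  have hcompl : Integrable
      (fun ω => 1 - ∑ j ∈ Finset.range (i + 1), {ω | Y ω = j}.indicator (1 : Ω → ℝ) ω) μ :=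
    (integrable_const 1).sub hsum
  rw [integral_add ((hI i).const_mul α) (hcompl.const_mul β),
    integral_const_mul, integral_const_mul, integral_sub (integrable_const 1) hsum,
    integral_finsetSum _ fun j _ => hI j, hprob i le_rfl,
    Finset.sum_congr rfl fun j hj => hprob j (Nat.lt_succ_iff.mp (Finset.mem_range.mp hj)),
    sum_firstDetection, Finset.prod_range_succ]
  simp
  ring

/-- If `h` vanishes below `i`, `h (X m)` is centred, and `F` does not distinguish between values
`≥ i` of the coordinate `m`, then `h (X m)` and `F X` are orthogonal. -/
lemma integral_mul_eq_zero_of_update {N : ℕ} {X : Fin N → Ω → ℕ}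
    (hX : ∀ n, Measurable (X n)) (hindep : iIndepFun X μ) {i : ℕ} {m : Fin N} {h : ℕ → ℝ}
    (hlt : ∀ x < i, h x = 0) (hzero : ∫ ω, h (X m ω) ∂μ = 0) {F : (Fin N → ℕ) → ℝ}
    (hF : ∀ x, i ≤ x m → F (Function.update x m i) = F x) :
    ∫ ω, h (X m ω) * F (fun n => X n ω) ∂μ = 0 := by
  classical
  let S : Finset (Fin N) := {m}
  let T : Finset (Fin N) := Finset.univ.erase m
  let G : (T → ℕ) → ℝ := fun y => F fun n => if hn : n ∈ T then y ⟨n, hn⟩ else i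
  have hpt : ∀ ω, h (X m ω) * F (fun n => X n ω) = h (X m ω) * G (fun n => X n ω) := by
    intro ω
    rcases lt_or_ge (X m ω) i with hlt' | hge
    · simp [hlt _ hlt']
    · congr 1
      rw [← hF _ hge]
      refine congrArg F (funext fun n => ?_)
      by_cases hn : n = m
      · subst hn; simp [T]
      · simp [T, hn]
  have hST : Disjoint S T := by simp [S, T]
  have hind := (hindep.indepFun_finset S T hST hX).comp
    (φ := fun y : S → ℕ => h (y ⟨m, Finset.mem_singleton_self m⟩)) (ψ := G)
    Measurable.of_discrete Measurable.of_discrete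
  have hh : Measurable fun ω => h (X m ω) := (Measurable.of_discrete (f := h)).comp (hX m)
  have hG : Measurable fun ω => G fun n : T => X n ω :=
    (Measurable.of_discrete (f := G)).comp (measurable_pi_lambda _ fun n => hX n)
  simp only [hpt]
  have key := IndepFun.integral_fun_mul_eq_mul_integral hind hh.aestronglyMeasurable
    hG.aestronglyMeasurable
  simp only [Function.comp_apply] at key
  rw [key, hzero, zero_mul]

end Probability

/-- Variance of the Coates estimator:
`E[(q̂ i − q i)²] = q i (1 − q i) · E[1_{Dc i > 0} / Dc i]`. -/
theorem coates_estimator_variance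
    {Ω : Type*} [MeasurableSpace Ω] (μ : Measure Ω) [IsProbabilityMeasure μ]
    (B : ℕ) (hB : 1 ≤ B) (N : ℕ)
    (q : ℕ → ℝ) (hq : ∀ i, i < B → q i ∈ Set.Icc (0 : ℝ) 1)
    (p : ℕ → ℝ)
    (hp : ∀ i, i < B → p i = q i * ∏ k ∈ Finset.range i, (1 - q k))
    (hpB : p B = ∏ k ∈ Finset.range B, (1 - q k))
    (X : Fin N → Ω → ℕ) (hXmeas : ∀ n, Measurable (X n))
    (hXrange : ∀ n ω, X n ω ≤ B)
    (hindep : iIndepFun X μ)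
    (hdist : ∀ n i, i ≤ B → μ {ω | X n ω = i} = ENNReal.ofReal (p i))
    (Nc : ℕ → Ω → ℕ)
    (hNc : ∀ i ω, Nc i ω = (Finset.univ.filter (fun n : Fin N => X n ω = i)).card)
    (Dc : ℕ → Ω → ℕ)
    (hDc : ∀ i ω, Dc i ω = N - ∑ j ∈ Finset.range i, Nc j ω)
    (qhat : ℕ → Ω → ℝ)
    (hqhat : ∀ i ω, qhat i ω =
      if 0 < Dc i ω then (Nc i ω : ℝ) / (Dc i ω : ℝ) else q i)
    (i : ℕ) (hi : i < B) :
    ∫ ω, (qhat i ω - q i) ^ 2 ∂μ =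
      q i * (1 - q i) * ∫ ω, (if 0 < Dc i ω then ((Dc i ω : ℝ))⁻¹ else 0) ∂μ := by
  have hqi : ∀ j ≤ i, q j ∈ Set.Icc (0 : ℝ) 1 := fun j hj => hq j (by omega)
  have hmean : ∀ (n : Fin N) (α β : ℝ), α * q i + β * (1 - q i) = 0 →
      ∫ ω, threeValued i α β (X n ω) ∂μ = 0 := by
    intro n α β hαβ
    rw [integral_threeValued hqi (hXmeas n)
      (fun j hj => by rw [hdist n j (by omega), hp j (by omega)]), hαβ, zero_mul]
  have hD : ∀ ω, Dc i ω = countGE i fun n => X n ω := by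
    intro ω
    have := sum_card_filter_eq_add_countGE i fun n => X n ω
    rw [hDc]
    simp only [hNc]
    omega
  let Y : ℕ → ℝ := threeValued i (1 - q i) (-q i)
  let V : ℕ → ℝ := threeValued i ((1 - q i) * (1 - 2 * q i)) (q i * (2 * q i - 1))
  let g : (Fin N → ℕ) → ℝ := fun x => ((countGE i x : ℝ)⁻¹) ^ 2
  let R : Fin N → (Fin N → ℕ) → ℝ := fun m x => (∑ n ∈ Finset.univ.erase m, Y (x n)) * g x
  have hg : ∀ (m : Fin N) x, i ≤ x m → g (Function.update x m i) = g x := by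
    intro m x hm
    simp only [g, countGE_update hm]
  have hR : ∀ (m : Fin N) x, i ≤ x m → R m (Function.update x m i) = R m x := by
    intro m x hm
    simp only [R, hg m x hm]
    congr 1
    refine Finset.sum_congr rfl fun n hn => ?_
    rw [Function.update_of_ne (Finset.ne_of_mem_erase hn)]
  have hpt : ∀ ω, (qhat i ω - q i) ^ 2
      = ∑ m, V (X m ω) * g (fun n => X n ω) + ∑ m, Y (X m ω) * R m (fun n => X n ω)
        + q i * (1 - q i) * (if 0 < Dc i ω then ((Dc i ω : ℝ))⁻¹ else 0) := by
    intro ω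
    have hsum := sum_threeValued i (q i) fun n => X n ω
    have hsq := sum_threeValued_sq i (q i) fun n => X n ω
    have hexp := sq_sum_eq_sum_sq_add fun n => Y (X n ω)
    have hcollect : ∑ m, V (X m ω) * g (fun n => X n ω)
        + ∑ m, Y (X m ω) * R m (fun n => X n ω)
        = ((∑ n, Y (X n ω)) ^ 2 - q i * (1 - q i) * Dc i ω) * g (fun n => X n ω) := by
      rw [hexp, hsq, hD]
      simp only [R, ← mul_assoc, ← Finset.sum_mul]
      simp only [V, Y]
      ring
    rw [hcollect, hsum, hqhat, hNc]
    simp only [g, ← hD]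
    split_ifs with hpos
    · have : (Dc i ω : ℝ) ≠ 0 := by exact_mod_cast hpos.ne'
      field_simp
      ring
    · have : Dc i ω = 0 := by omega
      simp [this]
  have hVI : ∀ m ∈ Finset.univ, Integrable (fun ω => V (X m ω) * g (fun n => X n ω)) μ :=
    fun m _ => integrable_comp_of_le hXmeas hXrange fun x => V (x m) * g x
  have hYI : ∀ m ∈ Finset.univ, Integrable (fun ω => Y (X m ω) * R m (fun n => X n ω)) μ :=
    fun m _ => integrable_comp_of_le hXmeas hXrange fun x => Y (x m) * R m x
  have hDI : Integrable (fun ω => if 0 < Dc i ω then ((Dc i ω : ℝ))⁻¹ else 0) μ := by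
    simp only [hD]
    exact integrable_comp_of_le hXmeas hXrange
      fun x => if 0 < countGE i x then ((countGE i x : ℝ))⁻¹ else 0
  have hsumI : Integrable (fun ω => ∑ m, V (X m ω) * g (fun n => X n ω)
      + ∑ m, Y (X m ω) * R m (fun n => X n ω)) μ :=
    (integrable_finsetSum _ hVI).add (integrable_finsetSum _ hYI)
  simp only [hpt]
  rw [integral_add hsumI (hDI.const_mul _),
    integral_add (integrable_finsetSum _ hVI) (integrable_finsetSum _ hYI),
    integral_finsetSum _ hVI, integral_finsetSum _ hYI, integral_const_mul,
    Finset.sum_eq_zero fun m _ => integral_mul_eq_zero_of_update hXmeas hindep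
      (fun x hx => threeValued_of_lt _ _ hx) (hmean m _ _ (by ring)) (hg m),
    Finset.sum_eq_zero fun m _ => integral_mul_eq_zero_of_update hXmeas hindep
      (fun x hx => threeValued_of_lt _ _ hx) (hmean m _ _ (by ring)) (hR m)]
  ring
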